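/- Let δ > 0, let 𝒵 ⊆ ℝ be a measurable set of finite measure Z, and let η : ℝ → ℂ be a measurable function with |η_μ| = 1 for all μ ∈ 𝒵. Define H(α) = ∫_𝒵 η_μ e(−αμ) dμ and K₁(α) = (sin(πδα)/(πδα))². Then ∫_{-∞}^{∞} |H(α)|² K₁(α) dα ≤ 2Z. -/

import Mathlib

open Real MeasureTheory Set

/-!
`H` is the Fourier transform of `η` restricted to `𝒵`, a function in `L¹ ∩ L²`, and the Fejér kernel
`K₁ α = sinc² (π δ α)` takes values in `[0, 1]`. Hence Plancherel's theorem bounds the integral by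
`∫ ‖H‖² = ∫_𝒵 ‖η‖² = Z`, which even saves the factor `2` that comes from estimating the Fourier
transform of `K₁` pointwise. The `L²` Fourier transform is defined by extension from Schwartz
functions, so Plancherel's theorem for the Fourier integral rests on both transforms having the same
pairing with every Schwartz function.
-/

open scoped FourierTransform SchwartzMap ContDiff RealInnerProductSpace

section NormSqIntegral

variable {α E : Type*} [MeasurableSpace α] [NormedAddCommGroup E] {ν : Measure α} {s : Set α}
  {f : α → E} {C : ℝ}

theorem integral_norm_sq_eq_eLpNorm_sq (hf : MemLp f 2 ν) :
    ∫ x, ‖f x‖ ^ 2 ∂ν = (eLpNorm f 2 ν).toReal ^ 2 := by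
  have hnonneg : 0 ≤ ∫ x, ‖f x‖ ^ 2 ∂ν := by positivity
  rw [hf.eLpNorm_eq_integral_rpow_norm two_ne_zero ENNReal.ofNat_ne_top,
    ENNReal.toReal_ofReal (by positivity)]
  simpa using (rpow_inv_natCast_pow hnonneg two_ne_zero).symm

theorem memLp_indicator_of_norm_le (p : ENNReal) (hs : MeasurableSet s) (hν : ν s ≠ ⊤)
    (hf : AEStronglyMeasurable f (ν.restrict s)) (hC : ∀ x ∈ s, ‖f x‖ ≤ C) :
    MemLp (s.indicator f) p ν := by
  have : IsFiniteMeasure (ν.restrict s) := isFiniteMeasure_restrict.2 hν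
  exact (memLp_indicator_iff_restrict hs).2 (.of_bound hf C (ae_restrict_of_forall_mem hs hC))

theorem integral_norm_sq_indicator_le (hs : MeasurableSet s) (hν : ν s ≠ ⊤)
    (hC : ∀ x ∈ s, ‖f x‖ ≤ C) :
    ∫ x, ‖s.indicator f x‖ ^ 2 ∂ν ≤ C ^ 2 * ν.real s := by
  calc ∫ x, ‖s.indicator f x‖ ^ 2 ∂ν
      = ∫ x, s.indicator (fun x ↦ ‖f x‖ ^ 2) x ∂ν := by
        congr! 2 with x
        by_cases hx : x ∈ s <;> simp [hx]
    _ = ∫ x in s, ‖f x‖ ^ 2 ∂ν := integral_indicator hs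
    _ ≤ C ^ 2 * ν.real s := by
        refine (le_norm_self _).trans <|
          norm_setIntegral_le_of_norm_le_const hν.lt_top fun x hx ↦ ?_
        rw [norm_pow, norm_norm]
        gcongr
        exact hC x hx

end NormSqIntegral

theorem ae_eq_of_integral_schwartz_smul_eq {V E : Type*} [NormedAddCommGroup V]
    [NormedSpace ℝ V] [FiniteDimensional ℝ V] [MeasurableSpace V] [BorelSpace V]
    [NormedAddCommGroup E] [NormedSpace ℂ E] [CompleteSpace E] {ν : Measure V} {f g : V → E}
    (hf : LocallyIntegrable f ν) (hg : LocallyIntegrable g ν)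
    (h : ∀ φ : 𝓢(V, ℂ), ∫ x, φ x • f x ∂ν = ∫ x, φ x • g x ∂ν) : f =ᵐ[ν] g := by
  refine ae_eq_of_integral_contDiff_smul_eq hf hg fun φ φ_smooth φ_supp ↦ ?_
  have hsupp : HasCompactSupport (Complex.ofRealCLM ∘ φ) := φ_supp.comp_left rfl
  have hsmooth : ContDiff ℝ ∞ (Complex.ofRealCLM ∘ φ) := by fun_prop
  simpa using h (hsupp.toSchwartzMap hsmooth)

section Plancherel

variable {V E : Type*} [NormedAddCommGroup V] [InnerProductSpace ℝ V] [FiniteDimensional ℝ V]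
  [MeasurableSpace V] [BorelSpace V] [NormedAddCommGroup E]

theorem fourier_indicator_eq_setIntegral [NormedSpace ℂ E] {s : Set V} (hs : MeasurableSet s)
    (f : V → E) (w : V) : 𝓕 (s.indicator f) w = ∫ v in s, 𝐞 (-⟪v, w⟫) • f v := by
  rw [Real.fourier_eq, ← integral_indicator hs]
  congr with v
  by_cases hv : v ∈ s <;> simp [hv]

theorem continuous_fourier_of_integrable [NormedSpace ℂ E] {f : V → E} (hf : Integrable f) :
    Continuous (𝓕 f) :=
  VectorFourier.fourierIntegral_continuous continuous_fourierChar continuous_inner hf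

theorem integral_schwartz_fourier_smul [NormedSpace ℂ E] [CompleteSpace E] {f : V → E}
    (hf : Integrable f) (φ : 𝓢(V, ℂ)) : ∫ x, 𝓕 φ x • f x = ∫ x, φ x • 𝓕 f x := by
  simpa only [SchwartzMap.fourier_coe, flip_innerₗ] using!
    VectorFourier.integral_fourierIntegral_smul_eq_flip (L := innerₗ V)
      continuous_fourierChar continuous_inner φ.integrable hf

variable [InnerProductSpace ℂ E] [CompleteSpace E] {f : V → E}

theorem integral_schwartz_smul_fourier_toLp (hf₂ : MemLp f 2) (φ : 𝓢(V, ℂ)) :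
    ∫ x, φ x • (𝓕 (hf₂.toLp f) : Lp E 2 (volume : Measure V)) x = ∫ x, 𝓕 φ x • f x := by
  calc ∫ x, φ x • (𝓕 (hf₂.toLp f) : Lp E 2 (volume : Measure V)) x
      = ∫ x, 𝓕 φ x • hf₂.toLp f x := by
        simpa only [TemperedDistribution.fourier_apply, Lp.toTemperedDistribution_apply] using
          (congrArg (fun T : 𝓢'(V, E) ↦ T φ)
            (Lp.fourier_toTemperedDistribution_eq (hf₂.toLp f))).symm
    _ = ∫ x, 𝓕 φ x • f x := by
        refine integral_congr_ae ?_
        filter_upwards [hf₂.coeFn_toLp] with x hx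
        rw [hx]

theorem coeFn_fourier_toLp (hf₁ : Integrable f) (hf₂ : MemLp f 2) :
    (𝓕 (hf₂.toLp f) : Lp E 2 (volume : Measure V)) =ᵐ[volume] 𝓕 f :=
  ae_eq_of_integral_schwartz_smul_eq ((Lp.memLp _).locallyIntegrable one_le_two)
    (continuous_fourier_of_integrable hf₁).locallyIntegrable fun φ ↦
      (integral_schwartz_smul_fourier_toLp hf₂ φ).trans (integral_schwartz_fourier_smul hf₁ φ)

theorem memLp_two_fourier (hf₁ : Integrable f) (hf₂ : MemLp f 2) : MemLp (𝓕 f) 2 :=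
  (memLp_congr_ae (coeFn_fourier_toLp hf₁ hf₂)).1 (Lp.memLp _)

theorem eLpNorm_two_fourier (hf₁ : Integrable f) (hf₂ : MemLp f 2) :
    eLpNorm (𝓕 f) 2 = eLpNorm f 2 := by
  rw [← eLpNorm_congr_ae (coeFn_fourier_toLp hf₁ hf₂), ← eLpNorm_congr_ae hf₂.coeFn_toLp,
    ← Lp.enorm_def, ← Lp.enorm_def]
  exact enorm_eq_iff_norm_eq.2 (Lp.norm_fourier_eq _)

theorem integrable_norm_fourier_sq (hf₁ : Integrable f) (hf₂ : MemLp f 2) :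
    Integrable fun x ↦ ‖𝓕 f x‖ ^ 2 :=
  (memLp_two_fourier hf₁ hf₂).integrable_norm_pow two_ne_zero

theorem integral_norm_fourier_sq (hf₁ : Integrable f) (hf₂ : MemLp f 2) :
    ∫ x, ‖𝓕 f x‖ ^ 2 = ∫ x, ‖f x‖ ^ 2 := by
  rw [integral_norm_sq_eq_eLpNorm_sq (memLp_two_fourier hf₁ hf₂),
    integral_norm_sq_eq_eLpNorm_sq hf₂, eLpNorm_two_fourier hf₁ hf₂]

variable {K : V → ℝ}

theorem integrable_norm_fourier_sq_mul (hf₁ : Integrable f) (hf₂ : MemLp f 2)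
    (hK : AEStronglyMeasurable K) (hK₀₁ : ∀ α, K α ∈ Icc 0 1) :
    Integrable fun α ↦ ‖𝓕 f α‖ ^ 2 * K α :=
  (integrable_norm_fourier_sq hf₁ hf₂).mul_bdd hK <| .of_forall fun α ↦
    (norm_of_nonneg (hK₀₁ α).1).trans_le (hK₀₁ α).2

theorem integral_norm_fourier_sq_mul_le (hf₁ : Integrable f) (hf₂ : MemLp f 2)
    (hK₀₁ : ∀ α, K α ∈ Icc 0 1) : ∫ α, ‖𝓕 f α‖ ^ 2 * K α ≤ ∫ x, ‖f x‖ ^ 2 := by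
  rw [← integral_norm_fourier_sq hf₁ hf₂]
  exact integral_mono_of_nonneg
    (.of_forall fun α ↦ mul_nonneg (sq_nonneg _) (hK₀₁ α).1)
    (integrable_norm_fourier_sq hf₁ hf₂)
    (.of_forall fun α ↦ mul_le_of_le_one_right (sq_nonneg _) (hK₀₁ α).2)

end Plancherel

theorem fourierChar_neg_inner_smul_eq (z : ℂ) (μ α : ℝ) :
    𝐞 (-⟪μ, α⟫) • z = z * Complex.exp (-(2 * π * Complex.I * α * μ)) := by
  rw [Circle.smul_def, fourierChar_apply, smul_eq_mul, mul_comm]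
  congr 2
  simp only [RCLike.inner_apply, ringHom_apply, mul_neg, Complex.ofReal_neg, Complex.ofReal_mul,
    Complex.ofReal_ofNat, neg_mul, neg_inj]
  ring

theorem sinc_sq_mem_Icc (x : ℝ) : sinc x ^ 2 ∈ Icc 0 1 :=
  ⟨sq_nonneg _, (sq_le_one_iff_abs_le_one _).2 (abs_sinc_le_one x)⟩

theorem eq_sinc_sq_of_eq_sin_div_sq {c : ℝ} (hc : c ≠ 0) {K : ℝ → ℝ} (hK_zero : K 0 = 1)
    (hK : ∀ α, α ≠ 0 → K α = (sin (c * α) / (c * α)) ^ 2) :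
    K = fun α ↦ sinc (c * α) ^ 2 := by
  ext α
  rcases eq_or_ne α 0 with rfl | hα
  · simp [hK_zero]
  · rw [hK α hα, sinc_of_ne_zero (mul_ne_zero hc hα)]

theorem stmt_4_general {V E : Type*} [NormedAddCommGroup V] [InnerProductSpace ℝ V]
    [FiniteDimensional ℝ V] [MeasurableSpace V] [BorelSpace V] [NormedAddCommGroup E]
    [InnerProductSpace ℂ E] [CompleteSpace E] {𝒵 : Set V} (h𝒵 : MeasurableSet 𝒵)
    (hfin : volume 𝒵 < ⊤) {η : V → E} (hη : AEStronglyMeasurable η (volume.restrict 𝒵))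
    {C : ℝ} (hηC : ∀ μ ∈ 𝒵, ‖η μ‖ ≤ C) {H : V → E}
    (hH : ∀ α, H α = ∫ μ in 𝒵, 𝐞 (-⟪μ, α⟫) • η μ) {K : V → ℝ} (hK : AEStronglyMeasurable K)
    (hK₀₁ : ∀ α, K α ∈ Icc 0 1) :
    Integrable (fun α ↦ ‖H α‖ ^ 2 * K α) ∧
      ∫ α, ‖H α‖ ^ 2 * K α ≤ C ^ 2 * volume.real 𝒵 := by
  obtain rfl : H = 𝓕 (𝒵.indicator η) :=
    funext fun α ↦ (hH α).trans (fourier_indicator_eq_setIntegral h𝒵 η α).symm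
  have hLp (p : ENNReal) : MemLp (𝒵.indicator η) p :=
    memLp_indicator_of_norm_le p h𝒵 hfin.ne hη hηC
  have hL1 : Integrable (𝒵.indicator η) := memLp_one_iff_integrable.1 (hLp 1)
  exact ⟨integrable_norm_fourier_sq_mul hL1 (hLp 2) hK hK₀₁,
    (integral_norm_fourier_sq_mul_le hL1 (hLp 2) hK₀₁).trans
      (integral_norm_sq_indicator_le h𝒵 hfin.ne hηC)⟩

theorem stmt_4 (δ : ℝ) (hδ : 0 < δ)
    (𝒵 : Set ℝ) (h𝒵 : MeasurableSet 𝒵) (hfin : volume 𝒵 < ⊤)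
    (η : ℝ → ℂ) (hη : Measurable η) (hη1 : ∀ μ ∈ 𝒵, ‖η μ‖ = 1)
    (H : ℝ → ℂ)
    (hH : ∀ α : ℝ, H α = ∫ μ in 𝒵, η μ * Complex.exp (-(2 * π * Complex.I * α * μ)))
    (K₁ : ℝ → ℝ) (hK₁0 : K₁ 0 = 1)
    (hK₁ : ∀ α : ℝ, α ≠ 0 → K₁ α = (Real.sin (π * δ * α) / (π * δ * α)) ^ 2) :
    (∫ α : ℝ, ‖H α‖ ^ 2 * K₁ α) ≤ 2 * (volume 𝒵).toReal := by
  obtain rfl := eq_sinc_sq_of_eq_sin_div_sq (mul_pos pi_pos hδ).ne' hK₁0 hK₁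
  simp_rw [← fourierChar_neg_inner_smul_eq] at hH
  calc ∫ α, ‖H α‖ ^ 2 * sinc (π * δ * α) ^ 2
      ≤ 1 ^ 2 * volume.real 𝒵 :=
        (stmt_4_general h𝒵 hfin hη.aestronglyMeasurable (fun μ hμ ↦ (hη1 μ hμ).le) hH
          (by fun_prop) fun _ ↦ sinc_sq_mem_Icc _).2
    _ ≤ 2 * volume.real 𝒵 := by gcongr; norm_num
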